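/- There exists an absolute constant c > 0 such that for every alphabet Σ of size σ ≥ 2, every n ∈ ℕ, and every real δ with 0 < δ ≤ 1, if S ∈ Σⁿ is chosen uniformly at random, then with probability at least 1 − δ one has n − L(S) ≤ c·(1 + log_σ(1/δ)). Equivalently, for each δ > 0, L(S) = n − O(log_σ δ^{-1}) with probability at least 1 − δ. -/

import Mathlib

/-!
Let `σ` be the size of the alphabet. Two recursions bound the number of words `T` of length
`N` with `N - L(T) ≥ K` by `4 σ ^ N / σ ^ (K / 6)`, which is at most `δ σ ^ N` for
`K ≥ 12 (1 + log_σ (1 / δ))`.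

A bordered word has a border of some length `p` which does not overlap itself, so the word is
determined by `p` and by what is left after deleting its last `p` letters. If the `K` longest
prefixes of a word of length `N` are bordered, then the `K - p` longest prefixes of the shortened
word, of length `N - p`, are bordered as well. Hence the number `y K N` of such words satisfies
`y K N ≤ ∑ p, y (K - p) (N - p)`, and `y K N ≤ σ ^ N / r ^ K` as soon as `∑ p, (r / σ) ^ p ≤ 1`.

For `σ ≥ 3` this leaves room for some `r > 1` even if `p` ranges over all positive integers. For
`σ = 2` it does so only without `p = 2`, a length which the shortest border cannot have if the word
starts with two equal letters. A binary word starting with two different letters is determined by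
its tail `T'`, for which `(N - 1) - L(T') ≥ K - 1`; this second recursion costs a constant factor.
-/

open Finset

/-- `S` has a border of length `ℓ`: `1 ≤ ℓ ≤ |S|` and the length-`ℓ` prefix of `S`
equals its length-`ℓ` suffix. -/
def HasBorder {α : Type*} (S : List α) (ℓ : ℕ) : Prop :=
  1 ≤ ℓ ∧ ℓ ≤ S.length ∧ S.take ℓ = S.drop (S.length - ℓ)

/-- A string is unbordered if it has no proper border (no border of length `< |S|`). -/
def Unbordered {α : Type*} (S : List α) : Prop :=
  ∀ ℓ, ℓ < S.length → ¬ HasBorder S ℓ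

/-- `maxUnb S` is `L(S)`: the maximum length of (nonempty) unbordered factors of `S`. -/
noncomputable def maxUnb {α : Type*} (S : List α) : ℕ :=
  sSup {k | ∃ T, T ≠ [] ∧ T <:+: S ∧ Unbordered T ∧ T.length = k}

/-- `p > 0` is a period of `T` if `T[i] = T[i+p]` whenever both indices are valid. -/
def IsPeriod {α : Type*} (T : List α) (p : ℕ) : Prop :=
  0 < p ∧ ∀ (i : ℕ) (h : i + p < T.length),
    T[i]'(Nat.lt_of_le_of_lt (Nat.le_add_right i p) h) = T[i + p]'h

/-- `per T` is the shortest period of `T`. -/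
noncomputable def per {α : Type*} (T : List α) : ℕ := sInf {p | IsPeriod T p}

/-- `borderF S` is `F(S)`: the length of the shortest border of `S`. -/
noncomputable def borderF {α : Type*} (S : List α) : ℕ := sInf {ℓ | HasBorder S ℓ}

/-- `substr S i j` is the factor `S[i,j]` in 1-based closed-interval indexing. -/
def substr {α : Type*} (S : List α) (i j : ℕ) : List α := (S.drop (i - 1)).take (j + 1 - i)

/-! ### Borders -/

theorem unbordered_singleton {α : Type*} (a : α) : Unbordered [a] := by
  intro ℓ hℓ hborder
  have := hborder.1
  rw [List.length_singleton] at hℓ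
  omega

theorem not_unbordered_pair {α : Type*} (a : α) : ¬ Unbordered [a, a] :=
  fun h => h 1 (by simp) (by simp [HasBorder])

namespace HasBorder

variable {α : Type*} {T : List α} {ℓ m : ℕ}

theorem of_take (h : HasBorder T ℓ) (hm : HasBorder (T.take ℓ) m) : HasBorder T m := by
  obtain ⟨-, hℓ, heq⟩ := h
  obtain ⟨hm0, hmℓ, hmeq⟩ := hm
  rw [List.length_take_of_le hℓ] at hmℓ hmeq
  refine ⟨hm0, hmℓ.trans hℓ, ?_⟩
  rw [List.take_take, min_eq_left hmℓ, heq, List.drop_drop] at hmeq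
  rw [hmeq]
  congr 1
  omega

theorem take_of_overlap (h : HasBorder T ℓ) (hoverlap : T.length < 2 * ℓ) :
    HasBorder (T.take ℓ) (2 * ℓ - T.length) := by
  obtain ⟨-, hℓ, heq⟩ := h
  have hlen : (T.take ℓ).length = ℓ := List.length_take_of_le hℓ
  refine ⟨by omega, by omega, ?_⟩
  rw [hlen, show ℓ - (2 * ℓ - T.length) = T.length - ℓ by omega, List.drop_take, ← heq]
  congr 1
  omega

theorem take_append_take (h : HasBorder T ℓ) : T.take (T.length - ℓ) ++ T.take ℓ = T := by
  rw [h.2.2, List.take_append_drop]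

end HasBorder

theorem exists_unbordered_border {α : Type*} {T : List α} (hT : ¬ Unbordered T) :
    ∃ p, 2 * p ≤ T.length ∧ HasBorder T p ∧ Unbordered (T.take p) := by
  classical
  have hex : ∃ p, p < T.length ∧ HasBorder T p := by
    simpa only [Unbordered, not_forall, not_not, exists_prop] using hT
  obtain ⟨hp_lt, hp⟩ := Nat.find_spec hex
  have hlen : (T.take (Nat.find hex)).length = Nat.find hex := List.length_take_of_le hp.2.1
  have hunb : Unbordered (T.take (Nat.find hex)) := fun m hm hborder =>
    Nat.find_min hex (by omega) ⟨by omega, hp.of_take hborder⟩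
  refine ⟨Nat.find hex, ?_, hp, hunb⟩
  by_contra! hoverlap
  exact hunb _ (by omega) (hp.take_of_overlap hoverlap)

/-! ### The longest unbordered factor -/

section maxUnb

variable {α : Type*}

theorem Unbordered.length_le_maxUnb {U T : List α} (hU : Unbordered U) (hUT : U <:+: T) :
    U.length ≤ maxUnb T := by
  rcases eq_or_ne U [] with rfl | hne
  · exact Nat.zero_le _
  · refine le_csSup ⟨T.length, ?_⟩ ⟨U, hne, hUT, hU, rfl⟩
    rintro _ ⟨V, -, hVT, -, rfl⟩
    exact hVT.length_le

theorem maxUnb_le_length (T : List α) : maxUnb T ≤ T.length := by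
  refine csSup_le' ?_
  rintro _ ⟨U, -, hUT, -, rfl⟩
  exact hUT.length_le

theorem maxUnb_le_maxUnb_of_isInfix {T T' : List α} (h : T <:+: T') : maxUnb T ≤ maxUnb T' := by
  refine csSup_le' ?_
  rintro _ ⟨U, -, hUT, hU, rfl⟩
  exact hU.length_le_maxUnb (hUT.trans h)

theorem maxUnb_cons_pos (a : α) (T : List α) : 0 < maxUnb (a :: T) :=
  (unbordered_singleton a).length_le_maxUnb (List.prefix_append [a] T).isInfix

end maxUnb

/-! ### Words whose long prefixes are bordered -/

theorem ncard_le_card_pow_of_forall_length_eq {α : Type*} [Fintype α] {N : ℕ} {A : Set (List α)}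
    (hA : ∀ T ∈ A, T.length = N) : A.ncard ≤ Fintype.card α ^ N :=
  calc A.ncard ≤ {T : List α | T.length = N}.ncard :=
        Set.ncard_le_ncard hA (List.finite_length_eq α N)
    _ = Nat.card (List.Vector α N) := rfl
    _ = Fintype.card α ^ N := by rw [Nat.card_eq_fintype_card, card_vector]

theorem mul_pow_le_pow_mul_div_pow {y r s : ℝ} (hy : 0 ≤ y) (hr : 1 ≤ r) (hs : 0 < s) {K N p : ℕ}
    (hp : p ≤ N) (h : y * r ^ (K - p) ≤ s ^ (N - p)) : y * r ^ K ≤ s ^ N * (r / s) ^ p :=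
  calc y * r ^ K ≤ y * r ^ (K - p + p) := by
        gcongr
        omega
    _ = y * r ^ (K - p) * r ^ p := by rw [pow_add, mul_assoc]
    _ ≤ s ^ (N - p) * r ^ p := by gcongr
    _ = s ^ N * (r / s) ^ p := by
        rw [pow_sub₀ _ hs.ne' hp, div_pow, div_eq_inv_mul, mul_assoc]

/-- The words of length `N` whose `K` longest prefixes, those of length greater than `N - K`, each
have a border that does not overlap itself and whose length lies in `P`. Deleting the last `p`
letters of such a word, where `p` is the length of its border, lowers both `K` and `N` by `p`. -/
def prefixBorderedWords (α : Type*) (P : Finset ℕ) (K N : ℕ) : Set (List α) :=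
  {T | T.length = N ∧
    ∀ U, U <+: T → N < U.length + K → ∃ p ∈ P, 2 * p ≤ U.length ∧ HasBorder U p}

section prefixBorderedWords

variable {α : Type*} (P : Finset ℕ)

theorem finite_prefixBorderedWords [Finite α] (K N : ℕ) : (prefixBorderedWords α P K N).Finite :=
  (List.finite_length_eq α N).subset fun _ hT => hT.1

theorem prefixBorderedWords_subset_biUnion {K : ℕ} (hK : 0 < K) (N : ℕ) :
    prefixBorderedWords α P K N ⊆ ⋃ p ∈ P ∩ Icc 1 N,
      (fun T => T ++ T.take p) '' prefixBorderedWords α P (K - p) (N - p) := by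
  rintro T ⟨rfl, hT⟩
  obtain ⟨p, hpP, hp, hborder⟩ := hT T List.prefix_rfl (by omega)
  have hp_pos := hborder.1
  have hlen : (T.take (T.length - p)).length = T.length - p :=
    List.length_take_of_le (Nat.sub_le _ _)
  simp only [Set.mem_iUnion]
  refine ⟨p, mem_inter.2 ⟨hpP, mem_Icc.2 ⟨hp_pos, by omega⟩⟩,
    T.take (T.length - p), ⟨hlen, ?_⟩, ?_⟩
  · intro U hU hlong
    have := hU.length_le
    rw [hlen] at this
    exact hT U (hU.trans (List.take_prefix _ _)) (by omega)
  · simp only [List.take_take, min_eq_left (show p ≤ T.length - p by omega)]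
    exact hborder.take_append_take

theorem ncard_prefixBorderedWords_le_sum [Finite α] {K : ℕ} (hK : 0 < K) (N : ℕ) :
    (prefixBorderedWords α P K N).ncard ≤
      ∑ p ∈ P ∩ Icc 1 N, (prefixBorderedWords α P (K - p) (N - p)).ncard := by
  have hfin (p : ℕ) := finite_prefixBorderedWords (α := α) P (K - p) (N - p)
  calc (prefixBorderedWords α P K N).ncard
      ≤ (⋃ p ∈ P ∩ Icc 1 N,
          (fun T => T ++ T.take p) '' prefixBorderedWords α P (K - p) (N - p)).ncard :=
        Set.ncard_le_ncard (prefixBorderedWords_subset_biUnion P hK N)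
          ((finite_toSet _).biUnion fun p _ => (hfin p).image _)
    _ ≤ ∑ p ∈ P ∩ Icc 1 N,
          ((fun T => T ++ T.take p) '' prefixBorderedWords α P (K - p) (N - p)).ncard :=
        set_ncard_biUnion_le _ _
    _ ≤ _ := sum_le_sum fun p _ => Set.ncard_image_le (hfin p)

variable {P} [Fintype α] [Nonempty α] {r : ℝ}

theorem ncard_prefixBorderedWords_mul_pow_le (hr : 1 ≤ r)
    (hP : ∑ p ∈ P, (r / Fintype.card α) ^ p ≤ 1) (K N : ℕ) :
    (prefixBorderedWords α P K N).ncard * r ^ K ≤ (Fintype.card α : ℝ) ^ N := by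
  have hσ : (0 : ℝ) < Fintype.card α := mod_cast Fintype.card_pos
  induction K using Nat.strong_induction_on generalizing N with
  | _ K ih =>
  rcases Nat.eq_zero_or_pos K with rfl | hK
  · rw [pow_zero, mul_one]
    exact_mod_cast ncard_le_card_pow_of_forall_length_eq
      fun T (hT : T ∈ prefixBorderedWords α P 0 N) => hT.1
  have hterm : ∀ p ∈ P ∩ Icc 1 N,
      (prefixBorderedWords α P (K - p) (N - p)).ncard * r ^ K ≤
        (Fintype.card α : ℝ) ^ N * (r / Fintype.card α) ^ p := by
    intro p hp
    obtain ⟨-, hp1, hpN⟩ : p ∈ P ∧ 1 ≤ p ∧ p ≤ N := by simpa only [mem_inter, mem_Icc] using hp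
    exact mul_pow_le_pow_mul_div_pow (Nat.cast_nonneg _) hr hσ hpN
      (ih (K - p) (by omega) (N - p))
  calc (prefixBorderedWords α P K N).ncard * r ^ K
      ≤ (∑ p ∈ P ∩ Icc 1 N, ((prefixBorderedWords α P (K - p) (N - p)).ncard : ℝ)) * r ^ K := by
        gcongr
        exact_mod_cast ncard_prefixBorderedWords_le_sum P hK N
    _ ≤ (Fintype.card α : ℝ) ^ N * ∑ p ∈ P ∩ Icc 1 N, (r / Fintype.card α) ^ p := by
        rw [sum_mul, mul_sum]
        exact sum_le_sum hterm
    _ ≤ (Fintype.card α : ℝ) ^ N * ∑ p ∈ P, (r / Fintype.card α) ^ p := by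
        gcongr
        exact inter_subset_left
    _ ≤ (Fintype.card α : ℝ) ^ N := mul_le_of_le_one_right (by positivity) hP

end prefixBorderedWords

/-! ### Words without long unbordered factors -/

/-- The words `T` of length `N` with `N - L(T) ≥ K`, written without truncated subtraction:
the words to be counted in bounding the probability that `N - L(T)` is large. -/
def deficientWords (α : Type*) (K N : ℕ) : Set (List α) :=
  {T | T.length = N ∧ maxUnb T + K ≤ N}

section deficientWords

variable {α : Type*} {K N : ℕ}

theorem finite_deficientWords [Finite α] : (deficientWords α K N).Finite :=
  (List.finite_length_eq α N).subset fun _ hT => hT.1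

theorem exists_unbordered_border_of_mem_deficientWords {T U : List α}
    (hT : T ∈ deficientWords α K N) (hUT : U <+: T) (hlong : N < U.length + K) :
    ∃ p ∈ Icc 1 N, 2 * p ≤ U.length ∧ HasBorder U p ∧ Unbordered (U.take p) := by
  obtain ⟨rfl, hK⟩ := hT
  have hU : ¬ Unbordered U := fun hU => by
    have := hU.length_le_maxUnb hUT.isInfix
    omega
  obtain ⟨p, hp, hborder, hunb⟩ := exists_unbordered_border hU
  have := hUT.length_le
  exact ⟨p, mem_Icc.2 ⟨hborder.1, by omega⟩, hp, hborder, hunb⟩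

theorem deficientWords_subset_prefixBorderedWords :
    deficientWords α K N ⊆ prefixBorderedWords α (Icc 1 N) K N := by
  refine fun T hT => ⟨hT.1, fun U hUT hlong => ?_⟩
  obtain ⟨p, hpN, hp, hborder, -⟩ := exists_unbordered_border_of_mem_deficientWords hT hUT hlong
  exact ⟨p, hpN, hp, hborder⟩

theorem cons_cons_self_mem_prefixBorderedWords {a : α} {T : List α}
    (hT : a :: a :: T ∈ deficientWords α K N) :
    a :: a :: T ∈ prefixBorderedWords α ((Icc 1 N).erase 2) K N := by
  refine ⟨hT.1, fun U hUT hlong => ?_⟩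
  obtain ⟨p, hpN, hp, hborder, hunb⟩ :=
    exists_unbordered_border_of_mem_deficientWords hT hUT hlong
  refine ⟨p, mem_erase.2 ⟨?_, hpN⟩, hp, hborder⟩
  rintro rfl
  have htake : U.take 2 = [a, a] := by
    have := List.prefix_iff_eq_take.1 ((List.take_prefix 2 U).trans hUT)
    rwa [List.length_take_of_le hborder.2.1] at this
  exact not_unbordered_pair a (htake ▸ hunb)

theorem tail_mem_deficientWords {a : α} {T : List α}
    (hT : a :: T ∈ deficientWords α (K + 1) (N + 1)) : T ∈ deficientWords α K N := by
  obtain ⟨hlen, hK⟩ := hT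
  have := maxUnb_le_maxUnb_of_isInfix (List.suffix_cons a T).isInfix
  exact ⟨Nat.succ_injective hlen, by omega⟩

theorem exists_cons_cons_of_mem_deficientWords {T : List α}
    (hT : T ∈ deficientWords α (K + 1) N) : ∃ a b U, T = a :: b :: U := by
  obtain ⟨rfl, hK⟩ := hT
  match T with
  | [] => simp at hK
  | [a] =>
    have := maxUnb_cons_pos a []
    rw [List.length_singleton] at hK
    omega
  | a :: b :: U => exact ⟨a, b, U, rfl⟩

theorem ncard_deficientWords_succ_le_of_card_eq_two [Fintype α] (hα : Fintype.card α = 2) :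
    (deficientWords α (K + 1) (N + 1)).ncard ≤
      (prefixBorderedWords α ((Icc 1 (N + 1)).erase 2) (K + 1) (N + 1)).ncard +
        (deficientWords α K N).ncard := by
  set B := prefixBorderedWords α ((Icc 1 (N + 1)).erase 2) (K + 1) (N + 1)
  have hshape : ∀ T ∈ deficientWords α (K + 1) (N + 1) \ B, ∃ a b U, a ≠ b ∧ T = a :: b :: U := by
    rintro T ⟨hT, hTB⟩
    obtain ⟨a, b, U, rfl⟩ := exists_cons_cons_of_mem_deficientWords hT
    refine ⟨a, b, U, ?_, rfl⟩
    rintro rfl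
    exact hTB (cons_cons_self_mem_prefixBorderedWords hT)
  have hmaps : ∀ T ∈ deficientWords α (K + 1) (N + 1) \ B, T.tail ∈ deficientWords α K N := by
    intro T hT
    obtain ⟨a, b, U, -, rfl⟩ := hshape T hT
    exact tail_mem_deficientWords hT.1
  have hinj : Set.InjOn List.tail (deficientWords α (K + 1) (N + 1) \ B) := by
    intro T hT T' hT' htail
    obtain ⟨a, b, U, hab, rfl⟩ := hshape T hT
    obtain ⟨a', b', U', hab', rfl⟩ := hshape T' hT'
    obtain ⟨rfl, rfl⟩ : b = b' ∧ U = U' := by simpa using htail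
    by_contra hne
    have : 2 < Fintype.card α :=
      Fintype.two_lt_card_iff.2 ⟨a, a', b, fun h => hne (h ▸ rfl), hab, hab'⟩
    omega
  calc (deficientWords α (K + 1) (N + 1)).ncard
      ≤ (deficientWords α (K + 1) (N + 1) \ B).ncard + B.ncard :=
        Set.ncard_le_ncard_sdiff_add_ncard _ _ (finite_prefixBorderedWords _ _ _)
    _ ≤ (deficientWords α K N).ncard + B.ncard :=
        Nat.add_le_add_right
          (Set.ncard_le_ncard_of_injOn _ hmaps hinj finite_deficientWords) _
    _ = B.ncard + (deficientWords α K N).ncard := add_comm _ _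

end deficientWords

theorem sum_Icc_one_pow_le_one {x : ℝ} (hx : 0 ≤ x) (hx2 : x ≤ 1 / 2) (N : ℕ) :
    ∑ p ∈ Icc 1 N, x ^ p ≤ 1 :=
  calc ∑ p ∈ Icc 1 N, x ^ p = ∑ p ∈ Ico 1 (N + 1), x ^ p := by
        rw [Ico_add_one_right_eq_Icc]
    _ ≤ x ^ 1 / (1 - x) := geom_sum_Ico_le_of_lt_one hx (by linarith)
    _ ≤ 1 := by
        rw [div_le_one (by linarith)]
        linarith

theorem sum_Icc_one_erase_two_pow_le_one {x : ℝ} (hx : 0 ≤ x) (hx2 : x ≤ 9 / 16) (N : ℕ) :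
    ∑ p ∈ (Icc 1 N).erase 2, x ^ p ≤ 1 := by
  have hsub : (Icc 1 N).erase 2 ⊆ insert 1 (Ico 3 (N + 1)) := by
    intro p hp
    simp only [mem_erase, mem_Icc, mem_insert, mem_Ico] at hp ⊢
    omega
  calc ∑ p ∈ (Icc 1 N).erase 2, x ^ p ≤ ∑ p ∈ insert 1 (Ico 3 (N + 1)), x ^ p := by gcongr
    _ = x + ∑ p ∈ Ico 3 (N + 1), x ^ p := by rw [sum_insert (by simp), pow_one]
    _ ≤ x + x ^ 3 / (1 - x) := by
        gcongr
        exact geom_sum_Ico_le_of_lt_one hx (by linarith)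
    _ ≤ 9 / 16 + (9 / 16) ^ 3 / (1 - 9 / 16) := by gcongr
    _ ≤ 1 := by norm_num

section counting

variable {α : Type*} [Fintype α] {r : ℝ}

theorem ncard_deficientWords_mul_pow_le_of_le_half [Nonempty α] (hr : 1 ≤ r)
    (hrα : r / Fintype.card α ≤ 1 / 2) (K N : ℕ) :
    (deficientWords α K N).ncard * r ^ K ≤ (Fintype.card α : ℝ) ^ N :=
  calc (deficientWords α K N).ncard * r ^ K
      ≤ (prefixBorderedWords α (Icc 1 N) K N).ncard * r ^ K := by
        gcongr
        exacts [finite_prefixBorderedWords _ _ _, deficientWords_subset_prefixBorderedWords]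
    _ ≤ _ := ncard_prefixBorderedWords_mul_pow_le hr
        (sum_Icc_one_pow_le_one (by positivity) hrα N) K N

theorem ncard_deficientWords_mul_pow_le_of_card_eq_two (hα : Fintype.card α = 2) (hr : 1 ≤ r)
    (hr2 : r ≤ 9 / 8) (K N : ℕ) : (deficientWords α K N).ncard * r ^ K ≤ 4 * (2 : ℝ) ^ N := by
  have : Nonempty α := Fintype.card_pos_iff.1 (by omega)
  have hσ : (Fintype.card α : ℝ) = 2 := by rw [hα, Nat.cast_ofNat]
  induction K generalizing N with
  | zero =>
    have hcard : ((deficientWords α 0 N).ncard : ℝ) ≤ (Fintype.card α : ℝ) ^ N :=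
      mod_cast ncard_le_card_pow_of_forall_length_eq fun T hT => hT.1
    have : (0 : ℝ) < 2 ^ N := by positivity
    rw [hσ] at hcard
    linarith
  | succ K ih =>
    rcases N with _ | N
    · have hempty : deficientWords α (K + 1) 0 = ∅ :=
        Set.eq_empty_of_forall_notMem fun T hT => absurd hT.2 (by omega)
      simp [hempty]
    set B := prefixBorderedWords α ((Icc 1 (N + 1)).erase 2) (K + 1) (N + 1)
    have hB : B.ncard * r ^ (K + 1) ≤ (2 : ℝ) ^ (N + 1) := by
      rw [← hσ]
      refine ncard_prefixBorderedWords_mul_pow_le hr ?_ _ _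
      refine sum_Icc_one_erase_two_pow_le_one (by positivity) ?_ _
      rw [hσ]
      linarith
    calc (deficientWords α (K + 1) (N + 1)).ncard * r ^ (K + 1)
        ≤ (B.ncard + (deficientWords α K N).ncard) * r ^ (K + 1) := by
          gcongr
          exact_mod_cast ncard_deficientWords_succ_le_of_card_eq_two hα
      _ = B.ncard * r ^ (K + 1) + (deficientWords α K N).ncard * r ^ K * r := by ring
      _ ≤ 2 ^ (N + 1) + 4 * 2 ^ N * (9 / 8) := by
          gcongr ?_ + ?_ * ?_
          exact ih N
      _ ≤ 4 * 2 ^ (N + 1) := by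
          have : (0 : ℝ) < 2 ^ N := by positivity
          rw [pow_succ]
          linarith

theorem ncard_deficientWords_mul_rpow_le (hα : 2 ≤ Fintype.card α) (K N : ℕ) :
    (deficientWords α K N).ncard * (Fintype.card α : ℝ) ^ (K / 6 : ℝ) ≤
      4 * (Fintype.card α : ℝ) ^ N := by
  have : Nonempty α := Fintype.card_pos_iff.1 (by omega)
  have hσ : (2 : ℝ) ≤ Fintype.card α := mod_cast hα
  -- The root is high enough for `r ≤ 9 / 8` when `σ = 2` and for `r ≤ σ / 2` when `σ ≥ 3`.
  obtain ⟨r, hr, hr6⟩ : ∃ r : ℝ, 1 ≤ r ∧ r ^ 6 = Fintype.card α :=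
    ⟨(Fintype.card α : ℝ) ^ (1 / 6 : ℝ), Real.one_le_rpow (by linarith) (by norm_num), by
      rw [← Real.rpow_mul_natCast (by positivity)]; norm_num⟩
  have hpow : (Fintype.card α : ℝ) ^ (K / 6 : ℝ) = r ^ K := by
    rw [← hr6, ← Real.rpow_natCast_mul (by positivity), ← Real.rpow_natCast]
    congr 1
    push_cast
    ring
  rw [hpow]
  rcases hα.eq_or_lt with hα2 | hα3
  · have hr2 : r ≤ 9 / 8 := by
      refine le_of_pow_le_pow_left₀ (n := 6) (by norm_num) (by norm_num) ?_
      rw [hr6, ← hα2]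
      norm_num
    simpa only [← hα2, Nat.cast_ofNat] using
      ncard_deficientWords_mul_pow_le_of_card_eq_two hα2.symm hr hr2 K N
  · have hσ3 : (3 : ℝ) ≤ Fintype.card α := mod_cast hα3
    have hrσ : r / Fintype.card α ≤ 1 / 2 := by
      rw [div_le_iff₀ (by positivity)]
      refine le_of_pow_le_pow_left₀ (n := 6) (by norm_num) (by positivity) ?_
      calc r ^ 6 = 1 / 2 ^ 6 * (2 ^ 6 * Fintype.card α) := by rw [hr6]; ring
        _ ≤ 1 / 2 ^ 6 * ((Fintype.card α : ℝ) ^ 5 * Fintype.card α) := by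
          gcongr
          exact (show (2 : ℝ) ^ 6 ≤ 3 ^ 5 by norm_num).trans (by gcongr)
        _ = (1 / 2 * Fintype.card α) ^ 6 := by ring
    have := ncard_deficientWords_mul_pow_le_of_le_half hr hrσ K N
    have : (0 : ℝ) ≤ (Fintype.card α : ℝ) ^ N := by positivity
    linarith

end counting

/-! ### Random words -/

theorem card_filter_lt_sub_maxUnb_mul_rpow_le {α : Type*} [Fintype α] (hα : 2 ≤ Fintype.card α)
    (n : ℕ) (x : ℝ) :
    #{S : Fin n → α | x < ((n - maxUnb (List.ofFn S) : ℕ) : ℝ)} *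
      (Fintype.card α : ℝ) ^ (x / 6) ≤ 4 * (Fintype.card α : ℝ) ^ n := by
  set A : Finset (Fin n → α) := {S | x < ((n - maxUnb (List.ofFn S) : ℕ) : ℝ)}
  have hA : #A ≤ (deficientWords α ⌈x⌉₊ n).ncard := by
    rw [← Set.ncard_coe_finset]
    refine Set.ncard_le_ncard_of_injOn List.ofFn (fun S hS => ⟨List.length_ofFn, ?_⟩)
      List.ofFn_injective.injOn finite_deficientWords
    have hS : x < ((n - maxUnb (List.ofFn S) : ℕ) : ℝ) := by simpa [A] using hS
    have hceil := Nat.ceil_le.2 hS.le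
    have hle := maxUnb_le_length (List.ofFn S)
    rw [List.length_ofFn] at hle
    omega
  have hσ : (1 : ℝ) ≤ Fintype.card α := mod_cast one_le_two.trans hα
  calc (#A : ℝ) * (Fintype.card α : ℝ) ^ (x / 6)
      ≤ (deficientWords α ⌈x⌉₊ n).ncard * (Fintype.card α : ℝ) ^ (⌈x⌉₊ / 6 : ℝ) := by
        gcongr
        exact Nat.le_ceil x
    _ ≤ 4 * (Fintype.card α : ℝ) ^ n := ncard_deficientWords_mul_rpow_le hα _ n

theorem four_le_mul_rpow_one_add_logb {b δ : ℝ} (hb : 2 ≤ b) (hδ : 0 < δ) (hδ1 : δ ≤ 1) :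
    4 ≤ δ * b ^ (2 * (1 + Real.logb b (1 / δ))) := by
  have hpow : b ^ (2 * (1 + Real.logb b (1 / δ))) = (b / δ) ^ 2 := by
    rw [mul_comm, Real.rpow_mul (by linarith), Real.rpow_two, Real.rpow_add (by linarith),
      Real.rpow_one, Real.rpow_logb (by linarith) (by linarith) (by positivity), mul_one_div]
  calc (4 : ℝ) ≤ b ^ 2 := by nlinarith
    _ ≤ b ^ 2 / δ := le_div_self (by positivity) hδ hδ1
    _ = δ * b ^ (2 * (1 + Real.logb b (1 / δ))) := by
      rw [hpow]
      field_simp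

theorem card_filter_lt_sub_maxUnb_le_mul_pow {α : Type*} [Fintype α] (hα : 2 ≤ Fintype.card α)
    (n : ℕ) {δ : ℝ} (hδ : 0 < δ) (hδ1 : δ ≤ 1) :
    #{S : Fin n → α | 12 * (1 + Real.logb (Fintype.card α) (1 / δ)) <
      ((n - maxUnb (List.ofFn S) : ℕ) : ℝ)} ≤ δ * (Fintype.card α : ℝ) ^ n := by
  set x := 12 * (1 + Real.logb (Fintype.card α) (1 / δ)) with hx
  set bad := #{S : Fin n → α | x < ((n - maxUnb (List.ofFn S) : ℕ) : ℝ)}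
  have htail : bad * (Fintype.card α : ℝ) ^ (x / 6) ≤ 4 * (Fintype.card α : ℝ) ^ n :=
    card_filter_lt_sub_maxUnb_mul_rpow_le hα n x
  have hδx : 4 ≤ δ * (Fintype.card α : ℝ) ^ (x / 6) := by
    rw [show x / 6 = 2 * (1 + Real.logb (Fintype.card α) (1 / δ)) by rw [hx]; ring]
    exact four_le_mul_rpow_one_add_logb (mod_cast hα) hδ hδ1
  have : bad * 4 ≤ δ * (Fintype.card α : ℝ) ^ n * 4 :=
    calc (bad * 4 : ℝ) ≤ bad * (δ * (Fintype.card α : ℝ) ^ (x / 6)) := by gcongr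
      _ = δ * (bad * (Fintype.card α : ℝ) ^ (x / 6)) := by ring
      _ ≤ δ * (4 * (Fintype.card α : ℝ) ^ n) := by gcongr
      _ = δ * (Fintype.card α : ℝ) ^ n * 4 := by ring
  linarith

theorem whp_maxUnbordered_general {α : Type*} [Fintype α] (hα : 2 ≤ Fintype.card α) (n : ℕ)
    {δ : ℝ} (hδ : 0 < δ) (hδ1 : δ ≤ 1) :
    1 - δ ≤ #{S : Fin n → α | ((n - maxUnb (List.ofFn S) : ℕ) : ℝ) ≤
      12 * (1 + Real.logb (Fintype.card α) (1 / δ))} / (Fintype.card α : ℝ) ^ n := by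
  have hbad := card_filter_lt_sub_maxUnb_le_mul_pow hα n hδ hδ1
  set x : ℝ := 12 * (1 + Real.logb (Fintype.card α) (1 / δ))
  have htotal : (#{S : Fin n → α | ((n - maxUnb (List.ofFn S) : ℕ) : ℝ) ≤ x} +
      #{S : Fin n → α | x < ((n - maxUnb (List.ofFn S) : ℕ) : ℝ)} : ℝ) = Fintype.card α ^ n := by
    have := card_filter_add_card_filter_not (s := (univ : Finset (Fin n → α)))
      fun S => ((n - maxUnb (List.ofFn S) : ℕ) : ℝ) ≤ x
    simp only [not_le, card_univ, Fintype.card_fun, Fintype.card_fin] at this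
    exact_mod_cast this
  rw [le_div_iff₀ (by positivity)]
  linarith

/-- there is an absolute constant `c > 0` such that for every alphabet of size
`σ ≥ 2`, every `n`, and every `0 < δ ≤ 1`, a uniformly random `S ∈ Σⁿ` satisfies
`n - L(S) ≤ c·(1 + log_σ(1/δ))` with probability at least `1 - δ`. -/
theorem whp_maxUnbordered : ∃ c : ℝ, 0 < c ∧
    ∀ (σ : ℕ), 2 ≤ σ → ∀ (Γ : Type) [Fintype Γ], Fintype.card Γ = σ →
      ∀ n : ℕ, ∀ δ : ℝ, 0 < δ → δ ≤ 1 →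
        1 - δ ≤ (((univ.filter fun S : Fin n → Γ =>
            ((n - maxUnb (List.ofFn S) : ℕ) : ℝ) ≤ c * (1 + Real.logb σ (1 / δ))).card : ℝ)) /
          (σ : ℝ) ^ n := by
  refine ⟨12, by norm_num, ?_⟩
  rintro _ hσ Γ _ rfl n δ hδ hδ1
  exact whp_maxUnbordered_general hσ n hδ hδ1
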